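/- arXiv:2206.15028 — 2 statements merged into one kernel-verified Lean document; each statement's English description precedes it below -/
import Mathlib

section
/- Let X be a partly regular coherent configuration on Ω and X' a coherent configuration on Ω with X' ≥ X. Then X' = X if and only if F(X') = F(X), i.e., X and X' have the same fibers. -/
open Set

universe u

/-- A coherent configuration on a finite set `Ω`: a partition `S` of `Ω × Ω`
satisfying (C1) the diagonal is a union of classes, (C2) closure under converse,
(C3) well-defined intersection numbers. -/
structure CohCfg (Ω : Type u) : Type u where
  S : Set (Set (Ω × Ω))
  finite : Finite Ω
  cover : ∀ p : Ω × Ω, ∃ s ∈ S, p ∈ s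
  disj : ∀ s ∈ S, ∀ t ∈ S, s ≠ t → s ∩ t = ∅
  nonemp : ∀ s ∈ S, s.Nonempty
  diag : ∀ s ∈ S, (∃ p ∈ s, p.1 = p.2) → ∀ p ∈ s, p.1 = p.2
  conv : ∀ s ∈ S, {p : Ω × Ω | (p.2, p.1) ∈ s} ∈ S
  inum : ∀ r ∈ S, ∀ s ∈ S, ∀ t ∈ S, ∀ p ∈ t, ∀ q ∈ t,
    {γ : Ω | (p.1, γ) ∈ r ∧ (γ, p.2) ∈ s}.ncard =
    {γ : Ω | (q.1, γ) ∈ r ∧ (γ, q.2) ∈ s}.ncard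

namespace CohCfg

variable {Ω Ω' : Type u}

/-- The intersection number `c^t_{rs}` computed at the pair `p`. -/
noncomputable def cnum (r s : Set (Ω × Ω)) (p : Ω × Ω) : ℕ :=
  {γ : Ω | (p.1, γ) ∈ r ∧ (γ, p.2) ∈ s}.ncard

/-- `X` is a scheme (homogeneous) if the full diagonal is a basis relation. -/
def IsScheme (X : CohCfg Ω) : Prop := {p : Ω × Ω | p.1 = p.2} ∈ X.S

/-- Commutativity: `c^t_{rs} = c^t_{sr}`. -/
def IsCommutative (X : CohCfg Ω) : Prop :=
  ∀ r ∈ X.S, ∀ s ∈ X.S, ∀ p : Ω × Ω, cnum r s p = cnum s r p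

/-- `s` is a relation of `X`, i.e. a union of basis relations. -/
def IsRelationOf (X : CohCfg Ω) (s : Set (Ω × Ω)) : Prop :=
  ∀ t ∈ X.S, (t ∩ s).Nonempty → t ⊆ s

/-- `X ≤ Y`: every (basis) relation of `X` is a relation of `Y`. -/
def le (X Y : CohCfg Ω) : Prop := ∀ s ∈ X.S, IsRelationOf Y s

/-- The diagonal relation `1_Δ` of a subset `Δ`. -/
def diagRel (Δ : Set Ω) : Set (Ω × Ω) := {p | p.1 = p.2 ∧ p.1 ∈ Δ}

/-- `Δ` is a fiber of `X`. -/
def IsFiber (X : CohCfg Ω) (Δ : Set Ω) : Prop := diagRel Δ ∈ X.S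

/-- `αs = {β | (α,β) ∈ s}`. -/
def pointSet (s : Set (Ω × Ω)) (α : Ω) : Set Ω := {β | (α, β) ∈ s}

/-- `X` is partly regular: some point `α` has `|αs| ≤ 1` for all basis relations. -/
def PartlyRegular (X : CohCfg Ω) : Prop :=
  ∃ α : Ω, ∀ s ∈ X.S, (pointSet s α).ncard ≤ 1

/-- The image `s^f` of a relation under a map of points. -/
def relImage (f : Ω → Ω') (s : Set (Ω × Ω)) : Set (Ω' × Ω') :=
  (fun p : Ω × Ω => (f p.1, f p.2)) '' s

/-- `φ` is an algebraic isomorphism from `X` to `X'`. -/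
structure IsAlgIso (X : CohCfg Ω) (X' : CohCfg Ω')
    (φ : Set (Ω × Ω) → Set (Ω' × Ω')) : Prop where
  bijOn : Set.BijOn φ X.S X'.S
  cnum_eq : ∀ r ∈ X.S, ∀ s ∈ X.S, ∀ t ∈ X.S, ∀ p ∈ t, ∀ q ∈ φ t,
    cnum r s p = cnum (φ r) (φ s) q

/-- The natural extension of an algebraic isomorphism to unions of basis relations. -/
def algImage (X : CohCfg Ω) (φ : Set (Ω × Ω) → Set (Ω' × Ω')) (s : Set (Ω × Ω)) :
    Set (Ω' × Ω') := ⋃₀ (φ '' {t | t ∈ X.S ∧ t ⊆ s})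

/-- The image `Δ^φ` of a fiber under an algebraic isomorphism. -/
def fiberImage (X : CohCfg Ω) (φ : Set (Ω × Ω) → Set (Ω' × Ω')) (Δ : Set Ω) : Set Ω' :=
  {α' | (α', α') ∈ φ (diagRel Δ)}

/-- `Y` is the point extension `X_α`: the smallest coherent configuration `≥ X`
having `1_α` as a basis relation. -/
def IsPointExt (X : CohCfg Ω) (α : Ω) (Y : CohCfg Ω) : Prop :=
  le X Y ∧ ({(α, α)} : Set (Ω × Ω)) ∈ Y.S ∧
    ∀ Z : CohCfg Ω, le X Z → ({(α, α)} : Set (Ω × Ω)) ∈ Z.S → le Y Z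

/-- `φ` has an `(α,α')`-extension: an algebraic isomorphism `X_α → X'_{α'}`
extending `φ` and sending `1_α` to `1_{α'}`. -/
def HasExtension (X : CohCfg Ω) (X' : CohCfg Ω') (φ : Set (Ω × Ω) → Set (Ω' × Ω'))
    (α : Ω) (α' : Ω') : Prop :=
  ∃ (Y : CohCfg Ω) (Y' : CohCfg Ω') (ψ : Set (Ω × Ω) → Set (Ω' × Ω')),
    IsPointExt X α Y ∧ IsPointExt X' α' Y' ∧ IsAlgIso Y Y' ψ ∧
    (∀ s ∈ X.S, algImage Y ψ s = φ s) ∧ ψ {(α, α)} = {(α', α')}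

/-- A sesquiclosed algebraic isomorphism: has an `(α,α')`-extension for all
`α ∈ Δ ∈ F(X)` and `α' ∈ Δ^φ`. -/
def SesquiclosedIso (X : CohCfg Ω) (X' : CohCfg Ω')
    (φ : Set (Ω × Ω) → Set (Ω' × Ω')) : Prop :=
  IsAlgIso X X' φ ∧
  ∀ Δ : Set Ω, IsFiber X Δ → ∀ α ∈ Δ, ∀ α' ∈ fiberImage X φ Δ, HasExtension X X' φ α α'

/-- `φ` is induced by the combinatorial isomorphism `f`. -/
def InducedBy (X : CohCfg Ω) (X' : CohCfg Ω') (φ : Set (Ω × Ω) → Set (Ω' × Ω'))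
    (f : Ω → Ω') : Prop :=
  Function.Bijective f ∧ ∀ s ∈ X.S, φ s = relImage f s

/-- `X` is separable: every algebraic isomorphism from `X` is induced by an isomorphism. -/
def Separable (X : CohCfg Ω) : Prop :=
  ∀ (Ω'' : Type u) (X' : CohCfg Ω'') (φ : Set (Ω × Ω) → Set (Ω'' × Ω'')),
    IsAlgIso X X' φ → ∃ f : Ω → Ω'', InducedBy X X' φ f

/-- `X` is sesquiseparable: every sesquiclosed algebraic isomorphism from `X`
is induced by an isomorphism. -/
def Sesquiseparable (X : CohCfg Ω) : Prop :=
  ∀ (Ω'' : Type u) (X' : CohCfg Ω'') (φ : Set (Ω × Ω) → Set (Ω'' × Ω'')),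
    SesquiclosedIso X X' φ → ∃ f : Ω → Ω'', InducedBy X X' φ f

/-- A sesquiclosed coherent configuration: (S1) the fibers of every one-point
extension `X_α` are the nonempty sets `αs`, and (S2) the identity algebraic
automorphism is sesquiclosed. -/
def SesquiclosedCfg (X : CohCfg Ω) : Prop :=
  (∀ α : Ω, ∀ Y : CohCfg Ω, IsPointExt X α Y →
     ∀ Δ : Set Ω, (IsFiber Y Δ ↔ ∃ s ∈ X.S, Δ = pointSet s α ∧ Δ.Nonempty)) ∧
  SesquiclosedIso X X id

/-- A parabolic of `X`: a relation that is an equivalence relation on `Ω`. -/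
def IsParabolic (X : CohCfg Ω) (e : Set (Ω × Ω)) : Prop :=
  IsRelationOf X e ∧ (∀ a : Ω, (a, a) ∈ e) ∧ (∀ p ∈ e, (p.2, p.1) ∈ e) ∧
    ∀ a b c : Ω, (a, b) ∈ e → (b, c) ∈ e → (a, c) ∈ e

/-- The class of `a` modulo the equivalence relation `e`. -/
def eClass (e : Set (Ω × Ω)) (a : Ω) : Set Ω := {b | (a, b) ∈ e}

/-- `Δ/e` is a section of `X`: `e` is a parabolic and `Δ` is a class of a
parabolic containing `e`. -/
def IsSection (X : CohCfg Ω) (Δ : Set Ω) (e : Set (Ω × Ω)) : Prop :=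
  IsParabolic X e ∧ ∃ d : Set (Ω × Ω), IsParabolic X d ∧ e ⊆ d ∧ ∃ a : Ω, Δ = eClass d a

/-- The point set of the section `Δ/e`: the `e`-classes of points of `Δ`. -/
abbrev Sec (Δ : Set Ω) (e : Set (Ω × Ω)) : Type u :=
  {Γ : Set Ω // ∃ a ∈ Δ, Γ = eClass e a}

/-- The relation `s_𝔖` on the section `𝔖 = Δ/e`. -/
def secRel (Δ : Set Ω) (e : Set (Ω × Ω)) (s : Set (Ω × Ω)) :
    Set (Sec Δ e × Sec Δ e) :=
  {p | ∃ a ∈ p.1.1, ∃ b ∈ p.2.1, (a, b) ∈ s}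

/-- `Y` is the coherent configuration `X_𝔖` on the section `𝔖 = Δ/e`. -/
def IsSectionCfg (X : CohCfg Ω) (Δ : Set Ω) (e : Set (Ω × Ω))
    (Y : CohCfg (Sec Δ e)) : Prop :=
  Y.S = {t | ∃ s ∈ X.S, t = secRel Δ e s ∧ t.Nonempty}

/-- The restriction `s_Δ` of a relation to a subset `Δ`. -/
def restRel (Δ : Set Ω) (s : Set (Ω × Ω)) : Set (↥Δ × ↥Δ) := {p | (p.1.1, p.2.1) ∈ s}

/-- `Y` is the restriction `X_Δ` of `X` to `Δ`. -/
def IsRestrictionCfg (X : CohCfg Ω) (Δ : Set Ω) (Y : CohCfg ↥Δ) : Prop :=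
  Y.S = {t | ∃ s ∈ X.S, t = restRel Δ s ∧ t.Nonempty}

/-- `Iso(X, X', φ)`: isomorphisms inducing the algebraic isomorphism `φ`. -/
def IsoSet (X : CohCfg Ω) (X' : CohCfg Ω') (φ : Set (Ω × Ω) → Set (Ω' × Ω')) :
    Set (Ω → Ω') :=
  {f | Function.Bijective f ∧ ∀ s ∈ X.S, relImage f s = φ s}

/-- `X` is schurian: its basis relations are the orbits of `Aut(X)` on `Ω × Ω`. -/
def Schurian (X : CohCfg Ω) : Prop :=
  ∀ s ∈ X.S, ∀ p ∈ s, ∀ q ∈ s, ∃ f : Ω → Ω,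
    (Function.Bijective f ∧ ∀ t ∈ X.S, relImage f t = t) ∧ (f p.1, f p.2) = q

/-- `e ⊆ rad(s)`: `s` is a union of products of pairs of `e`-classes it meets. -/
def RadGE (e s : Set (Ω × Ω)) : Prop :=
  ∀ p ∈ s, ∀ a b : Ω, (p.1, a) ∈ e → (p.2, b) ∈ e → (a, b) ∈ s

/-- The `e₁/e₀`-condition: every basis relation disjoint from `e₁` has `e₀` in
its radical. -/
def WedgeCond (X : CohCfg Ω) (e0 e1 : Set (Ω × Ω)) : Prop :=
  ∀ s ∈ X.S, s ∩ e1 = ∅ → RadGE e0 s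

/-- A circulant coherent configuration on a group `G`: right translations are
automorphisms. -/
def IsCirculant {G : Type u} [Group G] (X : CohCfg G) : Prop :=
  ∀ g : G, ∀ s ∈ X.S, relImage (fun x => x * g) s = s

/-- The equivalence relation `e(H)` whose classes are the cosets of `H`. -/
def eRelSet {G : Type u} [Group G] (H : Subgroup G) : Set (G × G) :=
  {p | p.1⁻¹ * p.2 ∈ H}

/-- `H` is an `X`-group. -/
def IsXGroup {G : Type u} [Group G] (X : CohCfg G) (H : Subgroup G) : Prop :=
  IsParabolic X (eRelSet H)

/-- A normal circulant scheme: every automorphism fixing the identity is a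
group automorphism. -/
def IsNormalCirc {G : Type u} [Group G] (X : CohCfg G) : Prop :=
  ∀ f : G → G, Function.Bijective f → (∀ s ∈ X.S, relImage f s = s) → f 1 = 1 →
    ∀ a b : G, f (a * b) = f a * f b

/-- Normality of a circulant scheme presented on a section `Δ/e` of a group `G`
(the points are cosets): every automorphism fixing the class of `1` respects the
coset multiplication. -/
def IsNormalSec {G : Type u} [Group G] (Δ : Set G) (e : Set (G × G))
    (Y : CohCfg (Sec Δ e)) : Prop :=
  ∀ F : Sec Δ e → Sec Δ e, Function.Bijective F → (∀ t ∈ Y.S, relImage F t = t) →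
    (∀ Γ : Sec Δ e, (1 : G) ∈ Γ.1 → F Γ = Γ) →
    ∀ Γ Γ' Γ'' : Sec Δ e, Γ''.1 = Set.image2 (· * ·) Γ.1 Γ'.1 →
      (F Γ'').1 = Set.image2 (· * ·) (F Γ).1 (F Γ').1

/-- Normality of a circulant scheme presented on (the subtype of) a subgroup `U ⊆ G`. -/
def IsNormalRest {G : Type u} [Group G] (U : Set G) (Y : CohCfg ↥U) : Prop :=
  ∀ F : ↥U → ↥U, Function.Bijective F → (∀ t ∈ Y.S, relImage F t = t) →
    (∀ x : ↥U, x.1 = 1 → F x = x) →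
    ∀ x y z : ↥U, z.1 = x.1 * y.1 → (F z).1 = (F x).1 * (F y).1

/-- `N` is an `X_U`-group: `N ≤ U` and the restriction of `e(N)` to `U` is a
relation of the restriction `X_U`. -/
def SubXGroup {G : Type u} [Group G] (X : CohCfg G) (U N : Subgroup G) : Prop :=
  N ≤ U ∧ ∀ s ∈ X.S, (∃ p ∈ s, p.1 ∈ U ∧ p.2 ∈ U ∧ p.1⁻¹ * p.2 ∈ N) →
    ∀ p ∈ s, p.1 ∈ U → p.2 ∈ U → p.1⁻¹ * p.2 ∈ N

end CohCfg

namespace CohCfg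

/-- Two pairs lie in the same basis relation. -/
def SameCls {Ω : Type u} (X : CohCfg Ω) (p q : Ω × Ω) : Prop := ∃ s ∈ X.S, p ∈ s ∧ q ∈ s

namespace SameCls

variable {Ω : Type u} {X : CohCfg Ω}

theorem eq_of_mem {s t : Set (Ω × Ω)} (hs : s ∈ X.S) (ht : t ∈ X.S) {p : Ω × Ω}
    (hps : p ∈ s) (hpt : p ∈ t) : s = t := by
  by_contra h
  have h1 := X.disj s hs t ht h
  have h2 : p ∈ s ∩ t := ⟨hps, hpt⟩
  rw [h1] at h2
  exact h2

theorem refl (p : Ω × Ω) : SameCls X p p := by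
  obtain ⟨s, hs, hp⟩ := X.cover p
  exact ⟨s, hs, hp, hp⟩

theorem symm {p q : Ω × Ω} (h : SameCls X p q) : SameCls X q p := by
  obtain ⟨s, hs, hp, hq⟩ := h
  exact ⟨s, hs, hq, hp⟩

theorem trans {p q r : Ω × Ω} (h : SameCls X p q) (h' : SameCls X q r) : SameCls X p r := by
  obtain ⟨s, hs, hp, hq⟩ := h
  obtain ⟨t, ht, hq', hr⟩ := h'
  have := eq_of_mem hs ht hq hq'
  subst this
  exact ⟨s, hs, hp, hr⟩

theorem swap {a b c d : Ω} (h : SameCls X (a, b) (c, d)) : SameCls X (b, a) (d, c) := by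
  obtain ⟨s, hs, hp, hq⟩ := h
  exact ⟨_, X.conv s hs, hp, hq⟩

theorem eq_of_diag {a b c : Ω} (h : SameCls X (a, a) (b, c)) : b = c := by
  obtain ⟨s, hs, hp, hq⟩ := h
  exact X.diag s hs ⟨_, hp, rfl⟩ _ hq

theorem transport {a b c d : Ω} (h : SameCls X (a, b) (c, d)) (x : Ω) :
    ∃ y, SameCls X (a, x) (c, y) ∧ SameCls X (x, b) (y, d) := by
  obtain ⟨t, ht, hp, hq⟩ := h
  obtain ⟨r, hr, hax⟩ := X.cover (a, x)
  obtain ⟨s, hs, hxb⟩ := X.cover (x, b)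
  have hfin := X.finite
  have hn := X.inum r hr s hs t ht _ hp _ hq
  have h1 : 0 < {γ : Ω | ((a, b).1, γ) ∈ r ∧ (γ, (a, b).2) ∈ s}.ncard :=
    (Set.ncard_pos (Set.toFinite _)).2 ⟨x, hax, hxb⟩
  rw [hn] at h1
  obtain ⟨y, hy1, hy2⟩ := (Set.ncard_pos (Set.toFinite _)).1 h1
  exact ⟨y, ⟨r, hr, hax, hy1⟩, ⟨s, hs, hxb, hy2⟩⟩

theorem left {a b c d : Ω} (h : SameCls X (a, b) (c, d)) : SameCls X (a, a) (c, c) := by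
  obtain ⟨y, h1, -⟩ := h.transport a
  have := h1.eq_of_diag
  subst this
  exact h1

theorem fiber {X' : CohCfg Ω} (hf : ∀ Δ : Set Ω, IsFiber X' Δ ↔ IsFiber X Δ) {a b : Ω}
    (h : SameCls X (a, a) (b, b)) : SameCls X' (a, a) (b, b) := by
  obtain ⟨s, hs, ha, hb⟩ := h
  have hd : diagRel {x | (x, x) ∈ s} = s := by
    ext ⟨x, y⟩
    constructor
    · rintro ⟨h1, h2⟩
      have h1 : x = y := h1
      subst h1
      exact h2
    · intro h
      have h1 : x = y := X.diag s hs ⟨_, ha, rfl⟩ _ h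
      subst h1
      exact ⟨rfl, h⟩
  have h1 : IsFiber X {x | (x, x) ∈ s} := by
    unfold IsFiber
    rw [hd]
    exact hs
  have h2 := (hf _).2 h1
  unfold IsFiber at h2
  rw [hd] at h2
  exact ⟨s, h2, ha, hb⟩

theorem mem_iff {s : Set (Ω × Ω)} (hs : s ∈ X.S) {p : Ω × Ω} (hp : p ∈ s) (q : Ω × Ω) :
    q ∈ s ↔ SameCls X p q := by
  constructor
  · intro h
    exact ⟨s, hs, hp, h⟩
  · rintro ⟨t, ht, h1, h2⟩
    rw [eq_of_mem hs ht hp h1]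
    exact h2

theorem subset_of_iff {X' : CohCfg Ω} (h : ∀ p q, SameCls X p q ↔ SameCls X' p q) :
    X.S ⊆ X'.S := by
  intro s hs
  obtain ⟨p, hp⟩ := X.nonemp s hs
  obtain ⟨t, ht, hpt⟩ := X'.cover p
  have : s = t := by
    ext q
    rw [mem_iff hs hp, mem_iff ht hpt, h]
  rw [this]
  exact ht

end SameCls

end CohCfg

open CohCfg in
/-- Corollary: a partly regular `X` and an extension `X' ≥ X` are equal iff they
have the same fibers. -/
theorem stmt_1 {Ω : Type u} (X X' : CohCfg Ω) (hreg : PartlyRegular X)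
    (hle : CohCfg.le X X') :
    X' = X ↔ (∀ Δ : Set Ω, IsFiber X' Δ ↔ IsFiber X Δ) := by
  constructor
  · rintro rfl Δ
    exact Iff.rfl
  intro hf
  obtain ⟨α, hα⟩ := hreg
  have hfin := X.finite
  have hdown : ∀ p q, SameCls X' p q → SameCls X p q := by
    rintro p q ⟨t, ht, hp, hq⟩
    obtain ⟨s, hs, hps⟩ := X.cover p
    exact ⟨s, hs, hps, hle s hs t ht ⟨p, hp, hps⟩ hq⟩
  have huniq0 : ∀ x y, SameCls X (α, x) (α, y) → x = y := by
    rintro x y ⟨s, hs, hx, hy⟩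
    exact (Set.ncard_le_one (Set.toFinite _)).1 (hα s hs) x hx y hy
  have huniq : ∀ β x y z, SameCls X (α, x) (β, y) → SameCls X (α, x) (β, z) → y = z := by
    intro β x y z h1 h2
    obtain ⟨w, h3, h4⟩ := h1.symm.transport z
    have hw := huniq0 _ _ (h2.trans h3)
    subst hw
    exact (h4.symm.eq_of_diag).symm
  have hstep : ∀ x β y, SameCls X (α, x) (β, y) → SameCls X' (α, x) (β, y) := by
    intro x β y h
    obtain ⟨z, h1, -⟩ := (SameCls.fiber hf h.left).transport x
    have := huniq _ _ _ _ h (hdown _ _ h1)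
    subst this
    exact h1
  have hup : ∀ p q, SameCls X p q → SameCls X' p q := by
    rintro ⟨a, b⟩ ⟨c, d⟩ h
    obtain ⟨β, h1, h2⟩ := h.transport α
    have h3 := (hstep _ _ _ h1.swap).swap
    obtain ⟨e, h4, h5⟩ := h3.transport b
    have := huniq _ _ _ _ h2 (hdown _ _ h5.swap)
    subst this
    exact h4
  have hS : X'.S = X.S :=
    Set.Subset.antisymm (SameCls.subset_of_iff fun p q => ⟨hdown p q, hup p q⟩)
      (SameCls.subset_of_iff fun p q => ⟨hup p q, hdown p q⟩)
  cases X
  cases X'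
  cases hS
  rfl
end

section
/- Let X be a sesquiclosed coherent configuration and 𝔖 a section of X. Then the coherent configuration X_𝔖 is sesquiclosed. -/
open Set

universe u

namespace CohCfg

section Helpers

variable {Ω : Type u}

/-- Uniqueness of the basis relation containing a pair. -/
lemma uniq (X : CohCfg Ω) {s t : Set (Ω × Ω)} (hs : s ∈ X.S) (ht : t ∈ X.S) {p : Ω × Ω}
    (h1 : p ∈ s) (h2 : p ∈ t) : s = t := by
  by_contra h
  have := X.disj s hs t ht h
  have h3 : p ∈ s ∩ t := ⟨h1, h2⟩
  rw [this] at h3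
  exact h3

lemma cnum_ne_zero [Finite Ω] {r s : Set (Ω × Ω)} {p : Ω × Ω} :
    cnum r s p ≠ 0 ↔ ∃ γ, (p.1, γ) ∈ r ∧ (γ, p.2) ∈ s := by
  unfold cnum
  rw [← Nat.pos_iff_ne_zero, Set.ncard_pos (Set.toFinite _)]
  rfl

lemma id_algIso (X : CohCfg Ω) : IsAlgIso X X id :=
  ⟨Set.bijOn_id _, fun r hr s hs t ht p hp q hq => X.inum r hr s hs t ht p hp q hq⟩

/-- Characterisation of diagonal basis relations by intersection numbers. -/
lemma diag_char (X : CohCfg Ω) {u : Set (Ω × Ω)} (hu : u ∈ X.S) :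
    (∀ p ∈ u, p.1 = p.2) ↔
      ∀ r ∈ X.S, ∀ t ∈ X.S, (∃ p ∈ t, cnum u r p ≠ 0) → t = r := by
  have := X.finite
  constructor
  · rintro h r hr t ht ⟨p, hp, hc⟩
    obtain ⟨γ, h1, h2⟩ := cnum_ne_zero.1 hc
    have := h _ h1
    simp only at this
    subst this
    exact uniq X ht hr hp h2
  · intro h p hp
    obtain ⟨δ, hδ, hpδ⟩ := X.cover (p.2, p.2)
    have := h δ hδ u hu ⟨p, hp, cnum_ne_zero.2 ⟨p.2, hp, hpδ⟩⟩
    subst this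
    exact X.diag u hu ⟨_, hpδ, rfl⟩ p hp

lemma algIso_diag {X X' : CohCfg Ω} {φ : Set (Ω × Ω) → Set (Ω × Ω)} (h : IsAlgIso X X' φ)
    {s : Set (Ω × Ω)} (hs : s ∈ X.S) {p q : Ω × Ω} (hp : p ∈ s) (hq : q ∈ φ s) :
    p.1 = p.2 ↔ q.1 = q.2 := by
  have hs' := h.bijOn.mapsTo hs
  have e1 : p.1 = p.2 ↔ ∀ p ∈ s, p.1 = p.2 := ⟨fun e => X.diag s hs ⟨p, hp, e⟩, fun e => e p hp⟩
  have e2 : q.1 = q.2 ↔ ∀ q ∈ φ s, q.1 = q.2 :=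
    ⟨fun e => X'.diag _ hs' ⟨q, hq, e⟩, fun e => e q hq⟩
  rw [e1, e2, diag_char X hs, diag_char X' hs']
  constructor
  · rintro H r hr t ht ⟨p, hp, hc⟩
    obtain ⟨r0, hr0, rfl⟩ := h.bijOn.surjOn hr
    obtain ⟨t0, ht0, rfl⟩ := h.bijOn.surjOn ht
    obtain ⟨p0, hp0⟩ := X.nonemp t0 ht0
    rw [← h.cnum_eq s hs r0 hr0 t0 ht0 p0 hp0 p hp] at hc
    rw [H r0 hr0 t0 ht0 ⟨p0, hp0, hc⟩]
  · rintro H r hr t ht ⟨p, hp, hc⟩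
    obtain ⟨p0, hp0⟩ := X'.nonemp _ (h.bijOn.mapsTo ht)
    rw [h.cnum_eq s hs r hr t ht p hp p0 hp0] at hc
    exact h.bijOn.injOn ht hr (H _ (h.bijOn.mapsTo hr) _ (h.bijOn.mapsTo ht) ⟨p0, hp0, hc⟩)

lemma algIso_conv {X X' : CohCfg Ω} {φ : Set (Ω × Ω) → Set (Ω × Ω)} (h : IsAlgIso X X' φ)
    {s : Set (Ω × Ω)} (hs : s ∈ X.S) {q : Ω × Ω} (hq : q ∈ φ s) :
    (q.2, q.1) ∈ φ {p | (p.2, p.1) ∈ s} := by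
  have := X.finite
  have hc := X.conv s hs
  obtain ⟨⟨a, b⟩, hab⟩ := X.nonemp s hs
  obtain ⟨δ, hδ, haδ⟩ := X.cover (a, a)
  obtain ⟨⟨x, y⟩, hxy⟩ := X'.nonemp _ (h.bijOn.mapsTo hδ)
  have hxe : x = y := (algIso_diag h hδ haδ hxy).1 rfl
  subst hxe
  have h1 : cnum s {p | (p.2, p.1) ∈ s} (a, a) ≠ 0 := cnum_ne_zero.2 ⟨b, hab, hab⟩
  rw [h.cnum_eq s hs _ hc δ hδ _ haδ _ hxy] at h1
  obtain ⟨γ, g1, g2⟩ := cnum_ne_zero.1 h1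
  have h2 := X'.conv _ (h.bijOn.mapsTo hs)
  have h3 := uniq X' h2 (h.bijOn.mapsTo hc) (p := (γ, x)) g1 g2
  rw [← h3]
  exact hq

/-- Algebraic isomorphisms preserve counts for unions of basis relations. -/
lemma algIso_count {X X' : CohCfg Ω} {φ : Set (Ω × Ω) → Set (Ω × Ω)} (h : IsAlgIso X X' φ)
    {R R' T T' : Set (Ω × Ω)}
    (hR : ∀ s ∈ X.S, ∀ x ∈ s, ∀ y ∈ φ s, (x ∈ R ↔ y ∈ R'))
    (hT : ∀ s ∈ X.S, ∀ x ∈ s, ∀ y ∈ φ s, (x ∈ T ↔ y ∈ T'))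
    {t : Set (Ω × Ω)} (ht : t ∈ X.S) {p q : Ω × Ω} (hp : p ∈ t) (hq : q ∈ φ t) :
    cnum R T p = cnum R' T' q := by
  classical
  have := X.finite
  have hc' : ∀ y : Ω × Ω, ∃ s ∈ X.S, y ∈ φ s := by
    intro y
    obtain ⟨s, hs, hy⟩ := X'.cover y
    obtain ⟨s0, hs0, rfl⟩ := h.bijOn.surjOn hs
    exact ⟨s0, hs0, hy⟩
  choose c hcS hc using X.cover
  choose c' hcS' hc' using hc'
  have k1 : ∀ x, ∀ s ∈ X.S, (c x = s ↔ x ∈ s) := fun x s hs =>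
    ⟨fun e => e ▸ hc x, fun e => uniq X (hcS x) hs (hc x) e⟩
  have k2 : ∀ x, ∀ s ∈ X.S, (c' x = s ↔ x ∈ φ s) := fun x s hs =>
    ⟨fun e => e ▸ hc' x, fun e => h.bijOn.injOn (hcS' x) hs
      (uniq X' (h.bijOn.mapsTo (hcS' x)) (h.bijOn.mapsTo hs) (hc' x) e)⟩
  let f : Ω → Set (Ω × Ω) × Set (Ω × Ω) := fun γ => (c (p.1, γ), c (γ, p.2))
  let g : Ω → Set (Ω × Ω) × Set (Ω × Ω) := fun γ => (c' (q.1, γ), c' (γ, q.2))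
  have hfib : ∀ z, Nonempty ({a // f a = z} ≃ {b // g b = z}) := by
    rintro ⟨a, b⟩
    rw [← Finite.card_eq]
    by_cases hab : a ∈ X.S ∧ b ∈ X.S
    · obtain ⟨ha, hb⟩ := hab
      have := h.cnum_eq a ha b hb t ht p hp q hq
      unfold cnum at this
      rw [← Nat.card_coe_set_eq, ← Nat.card_coe_set_eq] at this
      have e1 : ∀ γ, f γ = (a, b) ↔ γ ∈ {γ | (p.1, γ) ∈ a ∧ (γ, p.2) ∈ b} := by
        intro γ
        simp only [f, Prod.mk.injEq, k1 _ a ha, k1 _ b hb, Set.mem_ofPred_eq]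
      have e2 : ∀ γ, g γ = (a, b) ↔ γ ∈ {γ | (q.1, γ) ∈ φ a ∧ (γ, q.2) ∈ φ b} := by
        intro γ
        simp only [g, Prod.mk.injEq, k2 _ a ha, k2 _ b hb, Set.mem_ofPred_eq]
      rw [Nat.card_congr (Equiv.subtypeEquivRight e1), Nat.card_congr (Equiv.subtypeEquivRight e2)]
      exact this
    · have : IsEmpty {x // f x = (a, b)} := ⟨fun x => hab (by
        have := x.2
        simp only [f, Prod.mk.injEq] at this
        exact ⟨this.1 ▸ hcS _, this.2 ▸ hcS _⟩)⟩
      have : IsEmpty {x // g x = (a, b)} := ⟨fun x => hab (by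
        have := x.2
        simp only [g, Prod.mk.injEq] at this
        exact ⟨this.1 ▸ hcS' _, this.2 ▸ hcS' _⟩)⟩
      simp
  let F : Ω ≃ Ω := Equiv.ofFiberEquiv (fun z => (hfib z).some)
  have hF : ∀ γ, g (F γ) = f γ := fun γ => Equiv.ofFiberEquiv_map _ γ
  unfold cnum
  refine Set.ncard_congr' (F.subtypeEquiv fun γ => ?_)
  have := hF γ
  simp only [f, g, Prod.mk.injEq] at this
  have m1 : (q.1, F γ) ∈ φ (c (p.1, γ)) := by rw [← this.1]; exact hc' _
  have m2 : (F γ, q.2) ∈ φ (c (γ, p.2)) := by rw [← this.2]; exact hc' _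
  exact and_congr (hR _ (hcS _) _ (hc _) _ m1) (hT _ (hcS _) _ (hc _) _ m2)

/-! ### Coherent relations on two copies -/

/-- A family of relations invariant under `E`. -/
def Inv (E : Bool × (Ω × Ω) → Bool × (Ω × Ω) → Prop) (r : Bool → Set (Ω × Ω)) : Prop :=
  ∀ x y, E x y → (x.2 ∈ r x.1 ↔ y.2 ∈ r y.1)

/-- Coherent relation on two copies of `Ω × Ω`. -/
structure Coh (E : Bool × (Ω × Ω) → Bool × (Ω × Ω) → Prop) : Prop where
  diag : ∀ x y, E x y → (x.2.1 = x.2.2 ↔ y.2.1 = y.2.2)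
  conv : ∀ x y, E x y → E (x.1, x.2.swap) (y.1, y.2.swap)
  cnt : ∀ r s, Inv E r → Inv E s → ∀ x y, E x y →
    cnum (r x.1) (s x.1) x.2 = cnum (r y.1) (s y.1) y.2

/-- The coherent relation given by an algebraic isomorphism. -/
def isoRel (X : CohCfg Ω) (φ : Set (Ω × Ω) → Set (Ω × Ω)) (i j : Bool)
    (x y : Bool × (Ω × Ω)) : Prop :=
  x.1 = i ∧ y.1 = j ∧ ∃ s ∈ X.S, x.2 ∈ s ∧ y.2 ∈ φ s

lemma isoRel_coh {X X' : CohCfg Ω} {φ : Set (Ω × Ω) → Set (Ω × Ω)} (h : IsAlgIso X X' φ)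
    (i j : Bool) : Coh (isoRel X φ i j) := by
  refine ⟨?_, ?_, ?_⟩
  · rintro x y ⟨_, _, s, hs, hx, hy⟩
    exact algIso_diag h hs hx hy
  · rintro x y ⟨h1, h2, s, hs, hx, hy⟩
    exact ⟨h1, h2, _, X.conv s hs, hx, algIso_conv h hs hy⟩
  · rintro r s hr hs ⟨_, p⟩ ⟨_, q⟩ ⟨rfl, rfl, t, ht, hx, hy⟩
    exact algIso_count h (fun s hs x hx y hy => hr (_, x) (_, y) ⟨rfl, rfl, s, hs, hx, hy⟩)
      (fun s' hs' x hx y hy => hs (_, x) (_, y) ⟨rfl, rfl, s', hs', hx, hy⟩) ht hx hy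

lemma diagonal_coh : Coh (fun x y : Bool × (Ω × Ω) => x.2 = y.2 ∧ x.1 = false ∧ y.1 = true) := by
  refine ⟨?_, ?_, ?_⟩
  · rintro x y ⟨h, _⟩
    rw [h]
  · rintro x y ⟨h, h'⟩
    exact ⟨by rw [h], h'⟩
  · rintro r s hr hs ⟨_, p⟩ ⟨_, q⟩ ⟨h, rfl, rfl⟩
    simp only at h
    subst h
    have e1 : r false = r true := by
      ext z; exact hr (false, z) (true, z) ⟨rfl, rfl, rfl⟩
    have e2 : s false = s true := by
      ext z; exact hs (false, z) (true, z) ⟨rfl, rfl, rfl⟩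
    simp only [e1, e2]

section closure

variable {E : Bool × (Ω × Ω) → Bool × (Ω × Ω) → Prop}

lemma Inv.comp [Finite Ω] (hE : Coh E) {r s : Bool → Set (Ω × Ω)} (hr : Inv E r)
    (hs : Inv E s) : Inv E (fun i => {p | ∃ γ, (p.1, γ) ∈ r i ∧ (γ, p.2) ∈ s i}) := by
  intro x y h
  have := hE.cnt r s hr hs x y h
  simp only [Set.mem_ofPred_eq]
  rw [← cnum_ne_zero, ← cnum_ne_zero, this]

lemma Inv.inter {r s : Bool → Set (Ω × Ω)} (hr : Inv E r)
    (hs : Inv E s) : Inv E (fun i => r i ∩ s i) :=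
  fun x y h => and_congr (hr x y h) (hs x y h)

lemma Inv.univ : Inv E (fun _ => Set.univ) := fun _ _ _ => by simp

lemma Inv.row [Finite Ω] (hE : Coh E) {g : Bool → Ω} (hg : Inv E (fun i => {(g i, g i)})) :
    Inv E (fun i => {p | p.1 = g i}) := by
  intro x y h
  have := Inv.comp hE hg Inv.univ x y h
  simpa using this

lemma Inv.near [Finite Ω] (hE : Coh E) {g : Bool → Ω} (hg : Inv E (fun i => {(g i, g i)}))
    {s : Bool → Set (Ω × Ω)} (hs : Inv E s) : Inv E (fun i => {p | (p.1, g i) ∈ s i}) := by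
  intro x y h
  have := Inv.comp hE hs (Inv.row hE hg) x y h
  simpa using this

lemma Inv.near2 [Finite Ω] (hE : Coh E) {g : Bool → Ω} (hg : Inv E (fun i => {(g i, g i)}))
    {s : Bool → Set (Ω × Ω)} (hs : Inv E s) : Inv E (fun i => {p | (g i, p.2) ∈ s i}) := by
  intro x y h
  have := Inv.comp hE Inv.univ (Inv.inter hs (Inv.row hE hg)) x y h
  simpa using this

end closure

/-- The generators: relations of `X` in both copies, and the chosen points. -/
def Gen (X : CohCfg Ω) (g : Bool → Ω) (E : Bool × (Ω × Ω) → Bool × (Ω × Ω) → Prop) : Prop :=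
  (∀ s ∈ X.S, Inv E (fun _ => s)) ∧ Inv E (fun i => {(g i, g i)})

/-- The coarsest coherent equivalence. -/
def M (X : CohCfg Ω) (g : Bool → Ω) : Bool × (Ω × Ω) → Bool × (Ω × Ω) → Prop :=
  Relation.EqvGen (fun x y => ∃ E, Coh E ∧ Gen X g E ∧ E x y)

lemma le_M {X : CohCfg Ω} {g : Bool → Ω} {E : Bool × (Ω × Ω) → Bool × (Ω × Ω) → Prop}
    (h : Coh E) (hg : Gen X g E) {x y} (hxy : E x y) : M X g x y :=
  Relation.EqvGen.rel _ _ ⟨E, h, hg, hxy⟩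

lemma M_coh (X : CohCfg Ω) (g : Bool → Ω) : Coh (M X g) := by
  refine ⟨?_, ?_, ?_⟩
  · intro x y h
    induction h with
    | rel x y h => obtain ⟨E, h1, h2, h3⟩ := h; exact h1.diag _ _ h3
    | refl x => rfl
    | symm x y _ ih => exact ih.symm
    | trans x y z _ _ i1 i2 => exact i1.trans i2
  · intro x y h
    induction h with
    | rel x y h => obtain ⟨E, h1, h2, h3⟩ := h; exact le_M h1 h2 (h1.conv _ _ h3)
    | refl x => exact Relation.EqvGen.refl _
    | symm x y _ ih => exact Relation.EqvGen.symm _ _ ih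
    | trans x y z _ _ i1 i2 => exact Relation.EqvGen.trans _ _ _ i1 i2
  · intro r s hr hs x y h
    induction h with
    | rel x y h =>
      obtain ⟨E, h1, h2, h3⟩ := h
      exact h1.cnt r s (fun a b hab => hr a b (le_M h1 h2 hab))
        (fun a b hab => hs a b (le_M h1 h2 hab)) x y h3
    | refl x => rfl
    | symm x y _ ih => exact ih.symm
    | trans x y z _ _ i1 i2 => exact i1.trans i2

lemma inv_eqvGen {E : Bool × (Ω × Ω) → Bool × (Ω × Ω) → Prop} {r : Bool → Set (Ω × Ω)}
    (h : Inv E r) : Inv (Relation.EqvGen E) r := by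
  intro x y hxy
  induction hxy with
  | rel x y h' => exact h _ _ h'
  | refl x => rfl
  | symm x y _ ih => exact ih.symm
  | trans x y z _ _ i1 i2 => exact i1.trans i2

lemma M_gen (X : CohCfg Ω) (g : Bool → Ω) : Gen X g (M X g) := by
  constructor
  · intro s hs
    apply inv_eqvGen
    rintro x y ⟨E, h1, h2, h3⟩
    exact h2.1 s hs x y h3
  · apply inv_eqvGen
    rintro x y ⟨E, h1, h2, h3⟩
    exact h2.2 x y h3

/-- The coherent configuration on copy `i`. -/
def cfg (X : CohCfg Ω) (g : Bool → Ω) (i : Bool) : CohCfg Ω where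
  S := {s | ∃ p, s = {q | M X g (i, p) (i, q)}}
  finite := X.finite
  cover p := ⟨_, ⟨p, rfl⟩, Relation.EqvGen.refl _⟩
  disj := by
    rintro _ ⟨p, rfl⟩ _ ⟨q, rfl⟩ hne
    by_contra h
    obtain ⟨z, h1, h2⟩ := Set.nonempty_iff_ne_empty.2 h
    apply hne
    have h3 := h1.trans _ _ _ (h2.symm _ _)
    ext w
    exact ⟨fun hw => (h3.symm _ _).trans _ _ _ hw, fun hw => h3.trans _ _ _ hw⟩
  nonemp := by
    rintro _ ⟨p, rfl⟩
    exact ⟨p, Relation.EqvGen.refl _⟩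
  diag := by
    rintro _ ⟨p, rfl⟩ ⟨q, hq, hd⟩ z hz
    exact ((M_coh X g).diag _ _ ((hq.symm _ _).trans _ _ _ hz)).1 hd
  conv := by
    rintro _ ⟨p, rfl⟩
    refine ⟨p.swap, ?_⟩
    ext q
    exact ⟨fun h => (M_coh X g).conv _ _ h, fun h => (M_coh X g).conv _ _ h⟩
  inum := by
    rintro _ ⟨r, rfl⟩ _ ⟨s, rfl⟩ _ ⟨t, rfl⟩ p hp q hq
    have key : ∀ r, Inv (M X g) (fun j => {q | M X g (i, r) (j, q)}) := fun r x y h =>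
      ⟨fun h' => Relation.EqvGen.trans _ _ _ h' h, fun h' => Relation.EqvGen.trans _ _ _ h' (h.symm _ _)⟩
    exact (M_coh X g).cnt _ _ (key r) (key s) (i, p) (i, q) ((hp.symm _ _).trans _ _ _ hq)

lemma cfg_le (X : CohCfg Ω) (g : Bool → Ω) (i : Bool) : le X (cfg X g i) := by
  rintro s hs _ ⟨p, rfl⟩ ⟨q, hq, hqs⟩ z hz
  exact ((M_gen X g).1 s hs _ _ ((hq.symm _ _).trans _ _ _ hz)).1 hqs

lemma cfg_pt (X : CohCfg Ω) (g : Bool → Ω) (i : Bool) :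
    ({(g i, g i)} : Set (Ω × Ω)) ∈ (cfg X g i).S := by
  refine ⟨(g i, g i), ?_⟩
  ext q
  constructor
  · rintro rfl
    exact Relation.EqvGen.refl _
  · intro h
    exact ((M_gen X g).2 _ _ h).1 rfl

lemma gen_of_ext {X Z : CohCfg Ω} {g : Bool → Ω} {i : Bool} (h1 : le X Z)
    (h2 : ({(g i, g i)} : Set (Ω × Ω)) ∈ Z.S) : Gen X g (isoRel Z id i i) := by
  constructor
  · rintro s hs ⟨_, p⟩ ⟨_, q⟩ ⟨rfl, rfl, t, ht, hp, hq⟩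
    exact ⟨fun h => h1 s hs t ht ⟨p, hp, h⟩ hq, fun h => h1 s hs t ht ⟨q, hq, h⟩ hp⟩
  · rintro ⟨_, p⟩ ⟨_, q⟩ ⟨rfl, rfl, t, ht, hp, hq⟩
    constructor
    · intro h
      rwa [uniq Z ht h2 hp h] at hq
    · intro h
      rwa [uniq Z ht h2 hq h] at hp

lemma cfg_pointExt (X : CohCfg Ω) (g : Bool → Ω) (i : Bool) :
    IsPointExt X (g i) (cfg X g i) := by
  refine ⟨cfg_le X g i, cfg_pt X g i, ?_⟩
  rintro Z h1 h2 _ ⟨p, rfl⟩ t ht ⟨q, hqt, hq⟩ z hz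
  exact Relation.EqvGen.trans _ _ _ hq (le_M (isoRel_coh (id_algIso Z) i i) (gen_of_ext h1 h2)
    ⟨rfl, rfl, t, ht, hqt, hz⟩)

/-- If every class meets both copies, we get an extension of the identity. -/
lemma hasExt_of_meet (X : CohCfg Ω) (g : Bool → Ω)
    (h1 : ∀ p, ∃ q, M X g (false, p) (true, q)) (h2 : ∀ q, ∃ p, M X g (false, p) (true, q)) :
    HasExtension X X id (g false) (g true) := by
  let ψ : Set (Ω × Ω) → Set (Ω × Ω) := fun s => {q | ∃ p ∈ s, M X g (false, p) (true, q)}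
  have hψ : ∀ p, ψ {q | M X g (false, p) (false, q)} = {q | M X g (false, p) (true, q)} := by
    intro p
    ext q
    constructor
    · rintro ⟨z, hz, hq⟩
      exact Relation.EqvGen.trans _ _ _ hz hq
    · intro h
      exact ⟨p, Relation.EqvGen.refl _, h⟩
  have hψ2 : ∀ p q, M X g (false, p) (true, q) →
      ψ {z | M X g (false, p) (false, z)} = {z | M X g (true, q) (true, z)} := by
    intro p q h
    rw [hψ]
    ext z
    exact ⟨fun h' => (h.symm _ _).trans _ _ _ h', fun h' => h.trans _ _ _ h'⟩
  refine ⟨cfg X g false, cfg X g true, ψ, cfg_pointExt X g false, cfg_pointExt X g true,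
    ⟨⟨?_, ?_, ?_⟩, ?_⟩, ?_, ?_⟩
  · rintro _ ⟨p, rfl⟩
    obtain ⟨q, hq⟩ := h1 p
    exact ⟨q, hψ2 p q hq⟩
  · rintro _ ⟨p, rfl⟩ _ ⟨p', rfl⟩ he
    simp only [hψ] at he
    obtain ⟨q, hq⟩ := h1 p
    have hq' : q ∈ {q | M X g (false, p') (true, q)} := by rw [← he]; exact hq
    have h3 : M X g (false, p) (false, p') := hq.trans _ _ _ (Relation.EqvGen.symm _ _ hq')
    ext w
    exact ⟨fun hw => (h3.symm _ _).trans _ _ _ hw, fun hw => h3.trans _ _ _ hw⟩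
  · rintro _ ⟨q, rfl⟩
    obtain ⟨p, hp⟩ := h2 q
    exact ⟨_, ⟨p, rfl⟩, hψ2 p q hp⟩
  · rintro _ ⟨r, rfl⟩ _ ⟨s, rfl⟩ _ ⟨t, rfl⟩ p hp q hq
    rw [hψ] at hq
    rw [hψ, hψ]
    have key : ∀ r, Inv (M X g) (fun j => {q | M X g (false, r) (j, q)}) := fun r x y h =>
      ⟨fun h' => Relation.EqvGen.trans _ _ _ h' h, fun h' => Relation.EqvGen.trans _ _ _ h' (h.symm _ _)⟩
    exact (M_coh X g).cnt _ _ (key r) (key s) (false, p) (true, q)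
      (Relation.EqvGen.trans _ _ _ (Relation.EqvGen.symm _ _ hp) hq)
  · intro s hs
    ext q
    simp only [algImage, Set.mem_sUnion, Set.mem_image, Set.mem_ofPred_eq, id]
    constructor
    · rintro ⟨_, ⟨t, ⟨ht, hts⟩, rfl⟩, p, hp, hpq⟩
      exact ((M_gen X g).1 s hs _ _ hpq).1 (hts hp)
    · intro hq
      obtain ⟨p, hp⟩ := h2 q
      have hps := ((M_gen X g).1 s hs _ _ hp).2 hq
      refine ⟨_, ⟨{z | M X g (false, p) (false, z)}, ⟨⟨p, rfl⟩, ?_⟩, rfl⟩, ?_⟩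
      · intro z hz
        exact ((M_gen X g).1 s hs _ _ hz).1 hps
      · exact ⟨p, Relation.EqvGen.refl _, hp⟩
  · ext q
    constructor
    · rintro ⟨p, rfl, h⟩
      exact ((M_gen X g).2 _ _ h).1 rfl
    · rintro rfl
      obtain ⟨p, hp⟩ := h2 (g true, g true)
      exact ⟨p, ((M_gen X g).2 _ _ hp).2 rfl, hp⟩

end Helpers

section Sections

variable {Ω : Type u}

/-- The class of a point of `Δ`, as an element of the section. -/
def secMk {Δ : Set Ω} (e : Set (Ω × Ω)) {a : Ω} (ha : a ∈ Δ) : Sec Δ e :=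
  ⟨eClass e a, a, ha, rfl⟩

/-- Counting section points by size of classes. -/
lemma sec_card [Finite Ω] {Δ : Set Ω} {e : Set (Ω × Ω)} (h1 : ∀ a, (a, a) ∈ e)
    (h2 : ∀ p ∈ e, (p.2, p.1) ∈ e) (h3 : ∀ a b c : Ω, (a, b) ∈ e → (b, c) ∈ e → (a, c) ∈ e)
    (hΔ : ∀ a b, a ∈ Δ → (a, b) ∈ e → b ∈ Δ) (P : Sec Δ e → Prop) (k : ℕ) :
    {γ | ∃ h : γ ∈ Δ, P (secMk e h) ∧ (eClass e γ).ncard = k}.ncard =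
      k * {C : Sec Δ e | P C ∧ C.1.ncard = k}.ncard := by
  classical
  have hcl : ∀ C : Sec Δ e, ∀ γ ∈ C.1, ∃ h : γ ∈ Δ, C = secMk e h := by
    rintro ⟨_, a, ha, rfl⟩ γ hγ
    refine ⟨hΔ a γ ha hγ, Subtype.ext ?_⟩
    ext z
    exact ⟨fun hz => h3 _ _ _ (h2 _ hγ) hz, fun hz => h3 _ _ _ hγ hz⟩
  let T := (Set.toFinite {C : Sec Δ e | P C ∧ C.1.ncard = k}).toFinset
  have e1 : {γ | ∃ h : γ ∈ Δ, P (secMk e h) ∧ (eClass e γ).ncard = k} =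
      ((T.biUnion (fun C => (Set.toFinite C.1).toFinset) : Finset Ω) : Set Ω) := by
    ext γ
    simp only [Set.mem_ofPred_eq, Finset.coe_biUnion, Set.mem_iUnion, Finset.mem_coe, T,
      Set.Finite.mem_toFinset, exists_prop]
    constructor
    · rintro ⟨h, hP, hk⟩
      exact ⟨secMk e h, ⟨hP, hk⟩, h1 γ⟩
    · rintro ⟨C, ⟨hP, hk⟩, hγ⟩
      obtain ⟨h, rfl⟩ := hcl C γ hγ
      exact ⟨h, hP, hk⟩
  rw [e1, Set.ncard_coe_finset, Finset.card_biUnion]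
  · rw [Set.ncard_eq_toFinset_card _ (Set.toFinite _), mul_comm, ← smul_eq_mul]
    apply Finset.sum_const_nat
    intro C hC
    rw [← Set.ncard_eq_toFinset_card]
    simp only [T, Set.Finite.mem_toFinset, Set.mem_ofPred_eq] at hC
    exact hC.2
  · intro C _ C' _ hne
    refine Finset.disjoint_left.2 fun γ hγ hγ' => hne ?_
    simp only [Set.Finite.mem_toFinset] at hγ hγ'
    obtain ⟨h, e1⟩ := hcl C γ hγ
    obtain ⟨h', e2⟩ := hcl C' γ hγ'
    rw [e1, e2]

lemma sec_card_eq [Finite Ω] {Δ : Set Ω} {e : Set (Ω × Ω)} (h1 : ∀ a, (a, a) ∈ e)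
    (h2 : ∀ p ∈ e, (p.2, p.1) ∈ e) (h3 : ∀ a b c : Ω, (a, b) ∈ e → (b, c) ∈ e → (a, c) ∈ e)
    (hΔ : ∀ a b, a ∈ Δ → (a, b) ∈ e → b ∈ Δ) (P P' : Sec Δ e → Prop)
    (H : ∀ k : ℕ, {γ | ∃ h : γ ∈ Δ, P (secMk e h) ∧ (eClass e γ).ncard = k}.ncard =
      {γ | ∃ h : γ ∈ Δ, P' (secMk e h) ∧ (eClass e γ).ncard = k}.ncard) :
    {C | P C}.ncard = {C | P' C}.ncard := by
  classical
  have hk : ∀ k : ℕ, {C : Sec Δ e | P C ∧ C.1.ncard = k}.ncard =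
      {C : Sec Δ e | P' C ∧ C.1.ncard = k}.ncard := by
    intro k
    rcases Nat.eq_zero_or_pos k with rfl | hk
    · have : ∀ C : Sec Δ e, C.1.ncard ≠ 0 := by
        rintro ⟨_, a, ha, rfl⟩
        exact Set.ncard_ne_zero_of_mem (h1 a) (Set.toFinite _)
      simp [this]
    · have := H k
      rw [sec_card h1 h2 h3 hΔ, sec_card h1 h2 h3 hΔ] at this
      exact Nat.eq_of_mul_eq_mul_left hk this
  letI : Fintype (Sec Δ e) := Fintype.ofFinite _
  have tot : ∀ Q : Sec Δ e → Prop, {C | Q C}.ncard =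
      ∑ k ∈ Finset.univ.image (fun C : Sec Δ e => C.1.ncard),
        {C : Sec Δ e | Q C ∧ C.1.ncard = k}.ncard := by
    intro Q
    rw [Set.ncard_eq_toFinset_card', Finset.card_eq_sum_card_fiberwise
      (f := fun C : Sec Δ e => C.1.ncard)
      (t := Finset.univ.image (fun C : Sec Δ e => C.1.ncard)) (fun C _ => by simp)]
    refine Finset.sum_congr rfl fun k _ => ?_
    rw [Set.ncard_eq_toFinset_card']
    congr 1
    ext C
    simp
  rw [tot, tot]
  exact Finset.sum_congr rfl fun k _ => hk k

/-- The relation induced on the section. -/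
def secF (Δ : Set Ω) (e : Set (Ω × Ω)) (E : Bool × (Ω × Ω) → Bool × (Ω × Ω) → Prop)
    (x y : Bool × (Sec Δ e × Sec Δ e)) : Prop :=
  ∃ a b a' b', a ∈ x.2.1.1 ∧ b ∈ x.2.2.1 ∧ a' ∈ y.2.1.1 ∧ b' ∈ y.2.2.1 ∧
    E (x.1, (a, b)) (y.1, (a', b'))

lemma secF_coh [Finite Ω] {Δ : Set Ω} {e : Set (Ω × Ω)}
    {E : Bool × (Ω × Ω) → Bool × (Ω × Ω) → Prop} (hE : Coh E) (h1 : ∀ a, (a, a) ∈ e)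
    (h2 : ∀ p ∈ e, (p.2, p.1) ∈ e) (h3 : ∀ a b c : Ω, (a, b) ∈ e → (b, c) ∈ e → (a, c) ∈ e)
    (hΔ : ∀ a b, a ∈ Δ → (a, b) ∈ e → b ∈ Δ) (he : Inv E (fun _ => e))
    (hD : Inv E (fun _ => {p | p.1 ∈ Δ})) : Coh (secF Δ e E) := by
  have hcl : ∀ C : Sec Δ e, ∀ γ ∈ C.1, ∃ h : γ ∈ Δ, C = secMk e h := by
    rintro ⟨_, a, ha, rfl⟩ γ hγ
    refine ⟨hΔ a γ ha hγ, Subtype.ext ?_⟩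
    ext z
    exact ⟨fun hz => h3 _ _ _ (h2 _ hγ) hz, fun hz => h3 _ _ _ hγ hz⟩
  have hmk : ∀ a b (ha : a ∈ Δ) (hb : b ∈ Δ), secMk e ha = secMk e hb ↔ (a, b) ∈ e := by
    intro a b ha hb
    constructor
    · intro h
      have : b ∈ (secMk e hb).1 := h1 b
      rw [← h] at this
      exact this
    · intro h
      obtain ⟨_, h'⟩ := hcl (secMk e ha) b h
      exact h'
  refine ⟨?_, ?_, ?_⟩
  · rintro ⟨i, A, B⟩ ⟨j, A', B'⟩ ⟨a, b, a', b', ha, hb, ha', hb', h⟩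
    obtain ⟨_, rfl⟩ := hcl _ _ ha
    obtain ⟨_, rfl⟩ := hcl _ _ hb
    obtain ⟨_, rfl⟩ := hcl _ _ ha'
    obtain ⟨_, rfl⟩ := hcl _ _ hb'
    simp only [hmk]
    exact he _ _ h
  · rintro ⟨i, A, B⟩ ⟨j, A', B'⟩ ⟨a, b, a', b', ha, hb, ha', hb', h⟩
    exact ⟨b, a, b', a', hb, ha, hb', ha', hE.conv _ _ h⟩
  · intro r s hr hs
    have hsize : ∀ x y, E x y → (eClass e x.2.2).ncard = (eClass e y.2.2).ncard := by
      intro x y h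
      have := hE.cnt _ _ he Inv.univ _ _ (hE.conv _ _ h)
      simpa [cnum, eClass] using this
    have hR : ∀ r : Bool → Set (Sec Δ e × Sec Δ e), Inv (secF Δ e E) r →
        Inv E (fun i => {p | ∃ (hu : p.1 ∈ Δ) (hv : p.2 ∈ Δ), (secMk e hu, secMk e hv) ∈ r i}) := by
      rintro r hr ⟨i, u, v⟩ ⟨j, u', v'⟩ h
      have g1 := hD _ _ h
      have g2 := hD _ _ (hE.conv _ _ h)
      simp only [Set.mem_ofPred_eq, Prod.fst_swap] at g1 g2
      have g3 : ∀ (hu : u ∈ Δ) (hv : v ∈ Δ) (hu' : u' ∈ Δ) (hv' : v' ∈ Δ),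
          ((secMk e hu, secMk e hv) ∈ r i ↔ (secMk e hu', secMk e hv') ∈ r j) :=
        fun hu hv hu' hv' => hr (i, (secMk e hu, secMk e hv)) (j, (secMk e hu', secMk e hv'))
          ⟨u, v, u', v', h1 u, h1 v, h1 u', h1 v', h⟩
      constructor
      · rintro ⟨hu, hv, hm⟩
        exact ⟨g1.1 hu, g2.1 hv, (g3 _ _ _ _).1 hm⟩
      · rintro ⟨hu, hv, hm⟩
        exact ⟨g1.2 hu, g2.2 hv, (g3 _ _ _ _).2 hm⟩
    rintro ⟨i, A, B⟩ ⟨j, A', B'⟩ ⟨a, b, a', b', ha, hb, ha', hb', h⟩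
    obtain ⟨wa, rfl⟩ := hcl _ _ ha
    obtain ⟨wb, rfl⟩ := hcl _ _ hb
    obtain ⟨wa', rfl⟩ := hcl _ _ ha'
    obtain ⟨wb', rfl⟩ := hcl _ _ hb'
    unfold cnum
    apply sec_card_eq h1 h2 h3 hΔ
    intro k
    have hk : Inv E (fun _ => {p | (eClass e p.2).ncard = k}) := by
      intro x y hxy
      simp only [Set.mem_ofPred_eq, hsize x y hxy]
    have := hE.cnt _ _ ((hR r hr).inter hk) (hR s hs) _ _ h
    have conv : ∀ (i : Bool) (a b : Ω) (wa : a ∈ Δ) (wb : b ∈ Δ),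
        {γ | ∃ h : γ ∈ Δ, ((secMk e wa, secMk e h) ∈ r i ∧ (secMk e h, secMk e wb) ∈ s i) ∧
          (eClass e γ).ncard = k}.ncard =
        cnum ({p | ∃ (hu : p.1 ∈ Δ) (hv : p.2 ∈ Δ), (secMk e hu, secMk e hv) ∈ r i} ∩
          {p | (eClass e p.2).ncard = k})
          {p | ∃ (hu : p.1 ∈ Δ) (hv : p.2 ∈ Δ), (secMk e hu, secMk e hv) ∈ s i} (a, b) := by
      intro i a b wa wb
      unfold cnum
      congr 1
      ext γ
      simp only [Set.mem_ofPred_eq, Set.mem_inter_iff]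
      constructor
      · rintro ⟨h, ⟨m1, m2⟩, m3⟩
        exact ⟨⟨⟨wa, h, m1⟩, m3⟩, h, wb, m2⟩
      · rintro ⟨⟨⟨_, h, m1⟩, m3⟩, _, _, m2⟩
        exact ⟨h, ⟨m1, m2⟩, m3⟩
    exact (conv i a b wa wb).trans (this.trans (conv j a' b' wa' wb').symm)

/-- The main lemma: extensions of `X` descend to the section. -/
lemma main_desc (X : CohCfg Ω) (hX : SesquiclosedCfg X)
    (Δ : Set Ω) (e : Set (Ω × Ω)) (hsec : IsSection X Δ e)
    (Y : CohCfg (Sec Δ e)) (hY : IsSectionCfg X Δ e Y)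
    {α α' : Ω} (hα : α ∈ Δ) (hα' : α' ∈ Δ)
    {δ : Set (Ω × Ω)} (hδ : δ ∈ X.S) (hd1 : (α, α) ∈ δ) (hd2 : (α', α') ∈ δ) :
    ∃ F, Coh F ∧ Gen Y (fun b => cond b (secMk e hα') (secMk e hα)) F ∧
      (∀ p, ∃ q, F (false, p) (true, q)) ∧ (∀ q, ∃ p, F (false, p) (true, q)) ∧
      ∀ s ∈ X.S, ∀ b b' (hb : b ∈ Δ) (hb' : b' ∈ Δ), (α, b) ∈ s → (α', b') ∈ s →
        F (false, (secMk e hb, secMk e hb)) (true, (secMk e hb', secMk e hb')) := by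
  have := X.finite
  obtain ⟨⟨heR, h1, h2, h3⟩, d, ⟨hdR, k1, k2, k3⟩, hed, a0, hΔdef⟩ := hsec
  have hΔ : ∀ a b, a ∈ Δ → (a, b) ∈ e → b ∈ Δ := by
    intro a b ha hab
    rw [hΔdef] at ha ⊢
    exact k3 _ _ _ ha (hed hab)
  have hΔd : ∀ a b, a ∈ Δ → (b ∈ Δ ↔ (b, a) ∈ d) := by
    intro a b ha
    rw [hΔdef] at ha ⊢
    exact ⟨fun hb => k3 _ _ _ (k2 _ hb) ha, fun hb => k3 _ _ _ ha (k2 _ hb)⟩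
  have hcl : ∀ C : Sec Δ e, ∀ γ ∈ C.1, ∃ h : γ ∈ Δ, C = secMk e h := by
    rintro ⟨_, a, ha, rfl⟩ γ hγ
    refine ⟨hΔ a γ ha hγ, Subtype.ext ?_⟩
    ext z
    exact ⟨fun hz => h3 _ _ _ (h2 _ hγ) hz, fun hz => h3 _ _ _ hγ hz⟩
  have hmk : ∀ a b (ha : a ∈ Δ) (hb : b ∈ Δ), secMk e ha = secMk e hb ↔ (a, b) ∈ e := by
    intro a b ha hb
    constructor
    · intro h
      have : b ∈ (secMk e hb).1 := h1 b
      rw [← h] at this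
      exact this
    · intro h
      obtain ⟨_, h'⟩ := hcl (secMk e ha) b h
      exact h'
  -- the extension
  have hdiag : ∀ p ∈ δ, p.1 = p.2 := X.diag δ hδ ⟨_, hd1, rfl⟩
  have hfib : diagRel {x | (x, x) ∈ δ} = δ := by
    ext ⟨x, y⟩
    constructor
    · rintro ⟨hxy, hx⟩
      simp only at hxy
      subst hxy
      exact hx
    · intro h
      have := hdiag _ h
      simp only at this
      subst this
      exact ⟨rfl, h⟩
  obtain ⟨W, W', ψ, hW, hW', hψ, hext, hpt⟩ := hX.2.2 {x | (x, x) ∈ δ}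
    (by unfold IsFiber; rw [hfib]; exact hδ) α hd1 α'
    (by unfold fiberImage; rw [hfib]; exact hd2)
  let g : Bool → Ω := fun b => cond b α' α
  let E := isoRel W ψ false true
  have hE : Coh E := isoRel_coh hψ false true
  have hG1 : ∀ s ∈ X.S, Inv E (fun _ => s) := by
    rintro s hs ⟨_, p⟩ ⟨_, q⟩ ⟨rfl, rfl, t, ht, hp, hq⟩
    simp only at hp hq ⊢
    constructor
    · intro h
      have : q ∈ algImage W ψ s := ⟨ψ t, ⟨t, ⟨ht, hW.1 s hs t ht ⟨p, hp, h⟩⟩, rfl⟩, hq⟩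
      rw [hext s hs] at this
      exact this
    · intro h
      have : q ∈ algImage W ψ s := by rw [hext s hs]; exact h
      obtain ⟨_, ⟨t', ⟨ht', hts⟩, rfl⟩, hq'⟩ := this
      have := hψ.bijOn.injOn ht ht' (uniq W' (hψ.bijOn.mapsTo ht) (hψ.bijOn.mapsTo ht') hq hq')
      subst this
      exact hts hp
  have hG2 : Inv E (fun i => {(g i, g i)}) := by
    rintro ⟨_, p⟩ ⟨_, q⟩ ⟨rfl, rfl, t, ht, hp, hq⟩
    simp only [g, cond_false, cond_true] at hp hq ⊢
    constructor
    · intro h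
      rw [uniq W ht hW.2.1 hp h, hpt] at hq
      exact hq
    · intro h
      rw [← hpt] at h
      have := hψ.bijOn.injOn ht hW.2.1
        (uniq W' (hψ.bijOn.mapsTo ht) (hψ.bijOn.mapsTo hW.2.1) hq h)
      rw [this] at hp
      exact hp
  have hRel : ∀ r, IsRelationOf X r → Inv E (fun _ => r) := by
    intro r hr x y hxy
    simp only
    constructor
    · intro h
      obtain ⟨s, hs, hx⟩ := X.cover x.2
      exact hr s hs ⟨_, hx, h⟩ ((hG1 s hs _ _ hxy).1 hx)
    · intro h
      obtain ⟨s, hs, hx⟩ := X.cover y.2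
      exact hr s hs ⟨_, hx, h⟩ ((hG1 s hs _ _ hxy).2 hx)
  have he := hRel e heR
  have hgΔ : ∀ i, g i ∈ Δ := by
    intro i
    cases i
    · exact hα
    · exact hα'
  have hD : Inv E (fun _ => {p | p.1 ∈ Δ}) := by
    intro x y hxy
    have := Inv.near hE hG2 (hRel d hdR) x y hxy
    simp only [Set.mem_ofPred_eq] at this ⊢
    rw [hΔd _ _ (hgΔ x.1), hΔd _ _ (hgΔ y.1)]
    exact this
  have hgm : ∀ i, cond i (secMk e hα') (secMk e hα) = secMk e (hgΔ i) := by
    intro i; cases i <;> rfl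
  refine ⟨secF Δ e E, secF_coh hE h1 h2 h3 hΔ he hD, ⟨?_, ?_⟩, ?_, ?_, ?_⟩
  · intro t ht
    have key : ∀ (A B A' B' : Sec Δ e) (a b a' b' : Ω) (s : Set (Ω × Ω)), s ∈ X.S → a ∈ A.1 →
        b ∈ B.1 → a' ∈ A'.1 → b' ∈ B'.1 → (a, b) ∈ s → (a', b') ∈ s → (A, B) ∈ t →
        (A', B') ∈ t := by
      intro A B A' B' a b a' b' s hs ha hb ha' hb' m m' h
      have hm : (A, B) ∈ secRel Δ e s := ⟨a, ha, b, hb, m⟩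
      have hsY : secRel Δ e s ∈ Y.S := by
        rw [hY]
        exact ⟨s, hs, rfl, _, hm⟩
      rw [uniq Y ht hsY h hm]
      exact ⟨a', ha', b', hb', m'⟩
    rintro ⟨i, A, B⟩ ⟨j, A', B'⟩ ⟨a, b, a', b', ha, hb, ha', hb', h⟩
    obtain ⟨s, hs, hm⟩ := X.cover (a, b)
    have hm' := (hG1 s hs _ _ h).1 hm
    exact ⟨key A B A' B' a b a' b' s hs ha hb ha' hb' hm hm',
      key A' B' A B a' b' a b s hs ha' hb' ha hb hm' hm⟩
  · rintro ⟨i, A, B⟩ ⟨j, A', B'⟩ ⟨a, b, a', b', ha, hb, ha', hb', h⟩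
    obtain ⟨wa, rfl⟩ := hcl _ _ ha
    obtain ⟨wb, rfl⟩ := hcl _ _ hb
    obtain ⟨wa', rfl⟩ := hcl _ _ ha'
    obtain ⟨wb', rfl⟩ := hcl _ _ hb'
    have n1 := Inv.near hE hG2 he _ _ h
    have n2 := Inv.near hE hG2 he _ _ (hE.conv _ _ h)
    simp only [hgm, Set.mem_singleton_iff, Prod.mk.injEq, hmk]
    exact and_congr n1 n2
  · rintro ⟨⟨_, a, ha, rfl⟩, ⟨_, b, hb, rfl⟩⟩
    obtain ⟨s, hs, hm⟩ := W.cover (a, b)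
    obtain ⟨⟨a', b'⟩, hm'⟩ := W'.nonemp _ (hψ.bijOn.mapsTo hs)
    have h : E (false, (a, b)) (true, (a', b')) := ⟨rfl, rfl, s, hs, hm, hm'⟩
    have ha' : a' ∈ Δ := (hD _ _ h).1 ha
    have hb' : b' ∈ Δ := (hD _ _ (hE.conv _ _ h)).1 hb
    exact ⟨(secMk e ha', secMk e hb'), a, b, a', b', h1 a, h1 b, h1 a', h1 b', h⟩
  · rintro ⟨⟨_, a', ha', rfl⟩, ⟨_, b', hb', rfl⟩⟩
    obtain ⟨_, hs', hm'⟩ := W'.cover (a', b')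
    obtain ⟨s, hs, rfl⟩ := hψ.bijOn.surjOn hs'
    obtain ⟨⟨a, b⟩, hm⟩ := W.nonemp _ hs
    have h : E (false, (a, b)) (true, (a', b')) := ⟨rfl, rfl, s, hs, hm, hm'⟩
    have ha : a ∈ Δ := (hD _ _ h).2 ha'
    have hb : b ∈ Δ := (hD _ _ (hE.conv _ _ h)).2 hb'
    exact ⟨(secMk e ha, secMk e hb), a, b, a', b', h1 a, h1 b, h1 a', h1 b', h⟩
  · intro s hs b b' hb hb' m m'
    refine ⟨b, b, b', b', h1 b, h1 b, h1 b', h1 b', ?_⟩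
    obtain ⟨t, ht, hbt⟩ := W.cover (b, b)
    obtain ⟨⟨x, y⟩, hxt⟩ := W'.nonemp _ (hψ.bijOn.mapsTo ht)
    have hxy : x = y := (algIso_diag hψ ht hbt hxt).1 rfl
    subst hxy
    have h : E (false, (b, b)) (true, (x, x)) := ⟨rfl, rfl, t, ht, hbt, hxt⟩
    have hx : (α', x) ∈ s := (Inv.near2 hE hG2 (hG1 s hs) _ _ h).1 m
    have hF : IsFiber W' (pointSet s α') :=
      (hX.1 α' W' hW' _).2 ⟨s, hs, rfl, x, hx⟩
    have := uniq W' (hψ.bijOn.mapsTo ht) hF (p := (x, x)) hxt ⟨rfl, hx⟩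
    refine ⟨rfl, rfl, t, ht, hbt, ?_⟩
    rw [this]
    exact ⟨rfl, m'⟩

lemma sesq_section (X : CohCfg Ω) (hX : SesquiclosedCfg X)
    (Δ : Set Ω) (e : Set (Ω × Ω)) (hsec : IsSection X Δ e)
    (Y : CohCfg (Sec Δ e)) (hY : IsSectionCfg X Δ e Y) :
    SesquiclosedCfg Y := by
  have := X.finite
  have hYf := Y.finite
  obtain ⟨⟨heR, h1, h2, h3⟩, d, ⟨hdR, k1, k2, k3⟩, hed, a0, hΔdef⟩ := id hsec
  have hΔ : ∀ a b, a ∈ Δ → (a, b) ∈ e → b ∈ Δ := by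
    intro a b ha hab
    rw [hΔdef] at ha ⊢
    exact k3 _ _ _ ha (hed hab)
  have hcl : ∀ C : Sec Δ e, ∀ γ ∈ C.1, ∃ h : γ ∈ Δ, C = secMk e h := by
    rintro ⟨_, a, ha, rfl⟩ γ hγ
    refine ⟨hΔ a γ ha hγ, Subtype.ext ?_⟩
    ext z
    exact ⟨fun hz => h3 _ _ _ (h2 _ hγ) hz, fun hz => h3 _ _ _ hγ hz⟩
  refine ⟨?_, id_algIso Y, ?_⟩
  · intro Γ Z hZ
    let g : Bool → Sec Δ e := fun _ => Γ
    -- fibers of `Z` stay inside the sets `Γt`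
    have hA : ∀ t ∈ Y.S, ∀ x x' : Sec Δ e, ∀ z ∈ Z.S, (x, x) ∈ z → (x', x') ∈ z →
        (Γ, x) ∈ t → (Γ, x') ∈ t := by
      intro t ht x x' z hz hx hx' hxt
      have hgen : Gen Y g (isoRel Z id false false) := gen_of_ext (i := false) hZ.1 hZ.2.1
      exact (Inv.near2 (isoRel_coh (id_algIso Z) false false) hgen.2 (hgen.1 t ht)
        (false, (x, x)) (false, (x', x')) ⟨rfl, rfl, z, hz, hx, hx'⟩).1 hxt
    have hB : ∀ t ∈ Y.S, ∀ x x' : Sec Δ e, (Γ, x) ∈ t → (Γ, x') ∈ t → ∀ z ∈ Z.S,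
        (x, x) ∈ z → (x', x') ∈ z := by
      intro t ht x x' hx hx' z hz hxz
      rw [hY] at ht
      obtain ⟨s, hs, rfl, _⟩ := ht
      obtain ⟨α, hα, b, hb, m⟩ := hx
      obtain ⟨α', hα', b', hb', m'⟩ := hx'
      obtain ⟨wα, e1⟩ := hcl _ _ hα
      obtain ⟨wα', e1'⟩ := hcl _ _ hα'
      obtain ⟨wb, e2⟩ := hcl _ _ hb
      obtain ⟨wb', e2'⟩ := hcl _ _ hb'
      simp only at e1 e1' e2 e2'
      obtain ⟨δ, hδ, hαδ⟩ := X.cover (α, α)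
      have hαδ' : (α', α') ∈ δ := by
        have hdg := X.diag δ hδ ⟨_, hαδ, rfl⟩
        have hc : cnum δ s (α, b) ≠ 0 := cnum_ne_zero.2 ⟨α, hαδ, m⟩
        have hc' : cnum δ s (α', b') ≠ 0 := by
          intro h0
          exact hc ((X.inum δ hδ s hs s hs _ m _ m').trans h0)
        obtain ⟨γ, g1, _⟩ := cnum_ne_zero.1 hc'
        have := hdg _ g1
        simp only at this
        subst this
        exact g1
      obtain ⟨F, hF, hFG, _, _, hF4⟩ := main_desc X hX Δ e hsec Y hY wα wα' hδ hαδ hαδ'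
      have hgg : (fun i => cond i (secMk e wα') (secMk e wα)) = g := by
        funext i
        cases i
        · exact e1.symm
        · exact e1'.symm
      rw [hgg] at hFG
      have q1 := le_M hF hFG (hF4 s hs b b' wb wb' m m')
      rw [← e2, ← e2'] at q1
      have q2 : M Y g (false, (x', x')) (true, (x', x')) := by
        refine le_M diagonal_coh ⟨?_, ?_⟩ ⟨rfl, rfl, rfl⟩
        · rintro t ht u v ⟨huv, _⟩
          rw [huv]
        · rintro u v ⟨huv, _⟩
          rw [huv]
      have q3 : M Y g (false, (x, x)) (false, (x', x')) := q1.trans _ _ _ (q2.symm _ _)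
      exact hZ.2.2 (cfg Y g false) (cfg_le Y g false) (cfg_pt Y g false) z hz _
        ⟨(x, x), rfl⟩ ⟨(x, x), Relation.EqvGen.refl _, hxz⟩ q3
    intro Λ
    constructor
    · intro hΛ
      obtain ⟨⟨x, x'⟩, hx, hxΛ⟩ := Z.nonemp _ hΛ
      simp only at hx hxΛ
      subst hx
      obtain ⟨t, ht, hxt⟩ := Y.cover (Γ, x)
      refine ⟨t, ht, ?_, x, hxΛ⟩
      ext y
      constructor
      · intro hy
        exact hA t ht x y _ hΛ ⟨rfl, hxΛ⟩ ⟨rfl, hy⟩ hxt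
      · intro hy
        exact (hB t ht x y hxt hy _ hΛ ⟨rfl, hxΛ⟩).2
    · rintro ⟨t, ht, rfl, x, hx⟩
      obtain ⟨z, hz, hxz⟩ := Z.cover (x, x)
      have hzd := Z.diag z hz ⟨_, hxz, rfl⟩
      have : diagRel (pointSet t Γ) = z := by
        ext ⟨y, y'⟩
        constructor
        · rintro ⟨hyy, hy⟩
          simp only at hyy hy
          subst hyy
          exact hB t ht x y hx hy z hz hxz
        · intro hy
          have hyy := hzd _ hy
          simp only at hyy
          subst hyy
          exact ⟨rfl, hA t ht x y z hz hxz hy hx⟩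
      unfold IsFiber
      rw [this]
      exact hz
  · intro Λ hΛ Γ hΓ Γ' hΓ'
    have hΓ' : Γ' ∈ Λ := hΓ'.2
    obtain ⟨_, α, hα, rfl⟩ := Γ
    obtain ⟨δ, hδ, hαδ⟩ := X.cover (α, α)
    have hdg := X.diag δ hδ ⟨_, hαδ, rfl⟩
    have hm : (secMk e hα, secMk e hα) ∈ secRel Δ e δ := ⟨α, h1 α, α, h1 α, hαδ⟩
    have hsY : secRel Δ e δ ∈ Y.S := by
      rw [hY]
      exact ⟨δ, hδ, rfl, _, hm⟩
    have hm' : (Γ', Γ') ∈ secRel Δ e δ := by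
      rw [← uniq Y hΛ hsY (p := (secMk e hα, secMk e hα)) ⟨rfl, hΓ⟩ hm]
      exact ⟨rfl, hΓ'⟩
    obtain ⟨α', hα', β, _, hδ'⟩ := hm'
    have := hdg _ hδ'
    simp only at this
    subst this
    obtain ⟨wα', rfl⟩ := hcl _ _ hα'
    obtain ⟨F, hF, hFG, hF1, hF2, _⟩ := main_desc X hX Δ e hsec Y hY hα wα' hδ hαδ hδ'
    exact hasExt_of_meet Y (fun i => cond i (secMk e wα') (secMk e hα))
      (fun p => (hF1 p).imp fun q hq => le_M hF hFG hq)
      (fun q => (hF2 q).imp fun p hp => le_M hF hFG hp)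

end Sections

end CohCfg


open CohCfg in
/-- Lemma: a section configuration of a sesquiclosed coherent configuration is
sesquiclosed. -/
theorem stmt_6 {Ω : Type u} (X : CohCfg Ω) (hX : SesquiclosedCfg X)
    (Δ : Set Ω) (e : Set (Ω × Ω)) (hsec : IsSection X Δ e)
    (Y : CohCfg (Sec Δ e)) (hY : IsSectionCfg X Δ e Y) :
    SesquiclosedCfg Y := by
  exact sesq_section X hX Δ e hsec Y hY
end
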